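/- arXiv:2007.08283 — 9 statements merged into one kernel-verified Lean document; each statement's English description precedes it below -/
import Mathlib

section
/- Let X̃ be a replacement variable for X_j relative to G (conditions (i) and (ii) of the setup; for this statement only conditional independence of X̃ from X_U given X_G is needed from (ii)). Then the law of the triple ((X_G, X_U), X̃) under μ equals the composition-product of the law of (X_G, X_U) under μ with the kernel (g, u) ↦ (condDistrib X_j X_G μ) g; that is, the interventional distribution factorizes as P(X̃, X_G, X_U) = P(X_j | X_G) · P(X_G, X_U). -/
open MeasureTheory ProbabilityTheory
open scoped ProbabilityTheory

/-- The interventional distribution factorizes: the law of `((X_G, X_U), X̃)` is the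
composition-product of the law of `(X_G, X_U)` with the kernel `(g, u) ↦ P(X_j | X_G = g)`. -/
theorem rfi_interventional_factorization
    {Ω Ej EU EG : Type*}
    [MeasurableSpace Ω] [StandardBorelSpace Ω] [Nonempty Ω]
    [MeasurableSpace Ej] [StandardBorelSpace Ej] [Nonempty Ej]
    [MeasurableSpace EU] [StandardBorelSpace EU] [Nonempty EU]
    [MeasurableSpace EG] [StandardBorelSpace EG] [Nonempty EG]
    (μ : Measure Ω) [IsProbabilityMeasure μ]
    (Xj Xtil : Ω → Ej) (XU : Ω → EU) (XG : Ω → EG)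
    (hXj : Measurable Xj) (hXtil : Measurable Xtil)
    (hXU : Measurable XU) (hXG : Measurable XG)
    -- (i) the conditional distribution of `X̃` given `X_G` equals that of `X_j` given `X_G`
    (hrep : ∀ᵐ g ∂(μ.map XG), condDistrib Xtil XG μ g = condDistrib Xj XG μ g)
    -- (ii) `X̃` is conditionally independent of `X_U` given `X_G`
    (hci : CondIndepFun (MeasurableSpace.comap XG inferInstance) hXG.comap_le Xtil XU μ) :
    μ.map (fun ω => ((XG ω, XU ω), Xtil ω))
      = (μ.map (fun ω => (XG ω, XU ω))) ⊗ₘ ((condDistrib Xj XG μ).prodMkRight EU) := by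
  have h1 := (condIndepFun_iff_condDistrib_prod_ae_eq_prodMkRight hXtil hXU hXG).mp hci.symm
  have hm : Measurable (fun ω => (XG ω, XU ω)) := hXG.prodMk hXU
  rw [← compProd_map_condDistrib (X := fun ω => (XG ω, XU ω)) (μ := μ) hXtil.aemeasurable]
  refine Measure.compProd_congr ?_
  have h2 : ∀ᵐ p ∂(μ.map (fun ω => (XG ω, XU ω))),
      condDistrib Xtil XG μ p.1 = condDistrib Xj XG μ p.1 := by
    have h3 : (μ.map (fun ω => (XG ω, XU ω))).map Prod.fst = μ.map XG := by
      rw [Measure.map_map measurable_fst hm]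
      rfl
    rw [← h3] at hrep
    exact ae_of_ae_map measurable_fst.aemeasurable hrep
  filter_upwards [h1, h2] with p hp1 hp2
  rw [hp1, Kernel.prodMkRight_apply, Kernel.prodMkRight_apply, hp2]
end

section
/- Let X̃ be a replacement variable for X_j relative to G. If X_j is conditionally independent of the pair (X_U, Y) given X_G, then the law of (Y, X_j, X_U, X_G) under μ equals the law of (Y, X̃, X_U, X_G) under μ; that is, the observational and interventional joint distributions coincide. -/
open MeasureTheory ProbabilityTheory
open scoped ProbabilityTheory

/-- Distributional core of **Lemma 1**: if `X_j ⫫ (X_U, Y) | X_G`, then the observational and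
interventional joint distributions coincide. -/
theorem rfi_lemma1_distributional
    {Ω Ej EU EG EY : Type*}
    [MeasurableSpace Ω] [StandardBorelSpace Ω] [Nonempty Ω]
    [MeasurableSpace Ej] [StandardBorelSpace Ej] [Nonempty Ej]
    [MeasurableSpace EU] [StandardBorelSpace EU] [Nonempty EU]
    [MeasurableSpace EG] [StandardBorelSpace EG] [Nonempty EG]
    [MeasurableSpace EY] [StandardBorelSpace EY] [Nonempty EY]
    (μ : Measure Ω) [IsProbabilityMeasure μ]
    (Xj Xtil : Ω → Ej) (XU : Ω → EU) (XG : Ω → EG) (Y : Ω → EY)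
    (hXj : Measurable Xj) (hXtil : Measurable Xtil)
    (hXU : Measurable XU) (hXG : Measurable XG) (hY : Measurable Y)
    -- (i) the conditional distribution of `X̃` given `X_G` equals that of `X_j` given `X_G`
    (hrep : ∀ᵐ g ∂(μ.map XG), condDistrib Xtil XG μ g = condDistrib Xj XG μ g)
    -- (ii) `X̃` is conditionally independent of `(X_U, Y)` given `X_G`
    (hci : CondIndepFun (MeasurableSpace.comap XG inferInstance) hXG.comap_le Xtil
      (fun ω => (XU ω, Y ω)) μ)
    -- `X_j` is conditionally independent of `(X_U, Y)` given `X_G`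
    (hciXj : CondIndepFun (MeasurableSpace.comap XG inferInstance) hXG.comap_le Xj
      (fun ω => (XU ω, Y ω)) μ) :
    μ.map (fun ω => (Y ω, Xj ω, XU ω, XG ω)) = μ.map (fun ω => (Y ω, Xtil ω, XU ω, XG ω)) := by
  rw [condIndepFun_iff_map_prod_eq_prod_condDistrib_prod_condDistrib hXtil
    (hXU.prodMk hY) hXG] at hci
  rw [condIndepFun_iff_map_prod_eq_prod_condDistrib_prod_condDistrib hXj
    (hXU.prodMk hY) hXG] at hciXj
  have key : μ.map (fun ω => (XG ω, Xj ω, (XU ω, Y ω)))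
      = μ.map (fun ω => (XG ω, Xtil ω, (XU ω, Y ω))) := by
    rw [hci, hciXj]
    apply Measure.bind_congr_right
    filter_upwards [hrep] with g hg
    rw [Kernel.prod_apply, Kernel.prod_apply, Kernel.prod_apply, Kernel.prod_apply, hg]
  have hm : Measurable (fun p : EG × Ej × (EU × EY) => (p.2.2.2, p.2.1, p.2.2.1, p.1)) := by
    fun_prop
  have h2 := congrArg (Measure.map (fun p : EG × Ej × (EU × EY) =>
    (p.2.2.2, p.2.1, p.2.2.1, p.1))) key
  rw [Measure.map_map hm (by fun_prop), Measure.map_map hm (by fun_prop)] at h2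
  exact h2
end

section
/- Let X̃ be a replacement variable for X_j relative to G. If X_j is conditionally independent of the pair (X_U, Y) given X_G, then the relative feature importance vanishes: RFI_j^G = 0, i.e. the perturbed risk R̃ equals the original risk R. -/
open MeasureTheory ProbabilityTheory
open scoped ProbabilityTheory

/-- **Lemma 1**: if `X_j ⫫ (X_U, Y) | X_G`, then the relative feature importance vanishes,
i.e. the perturbed risk equals the original risk. -/
theorem rfi_lemma1
    {Ω Ej EU EG EY EYh : Type*}
    [MeasurableSpace Ω] [StandardBorelSpace Ω] [Nonempty Ω]
    [MeasurableSpace Ej] [StandardBorelSpace Ej] [Nonempty Ej]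
    [MeasurableSpace EU] [StandardBorelSpace EU] [Nonempty EU]
    [MeasurableSpace EG] [StandardBorelSpace EG] [Nonempty EG]
    [MeasurableSpace EY] [StandardBorelSpace EY] [Nonempty EY]
    [MeasurableSpace EYh]
    (μ : Measure Ω) [IsProbabilityMeasure μ]
    (Xj Xtil : Ω → Ej) (XU : Ω → EU) (XG : Ω → EG) (Y : Ω → EY)
    (hXj : Measurable Xj) (hXtil : Measurable Xtil)
    (hXU : Measurable XU) (hXG : Measurable XG) (hY : Measurable Y)
    (f : Ej × EU × EG → EYh) (hf : Measurable f)
    (L : EY × EYh → ℝ) (hL : Measurable L)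
    (hint : Integrable (fun ω => L (Y ω, f (Xj ω, XU ω, XG ω))) μ)
    (hint' : Integrable (fun ω => L (Y ω, f (Xtil ω, XU ω, XG ω))) μ)
    -- (i) the conditional distribution of `X̃` given `X_G` equals that of `X_j` given `X_G`
    (hrep : ∀ᵐ g ∂(μ.map XG), condDistrib Xtil XG μ g = condDistrib Xj XG μ g)
    -- (ii) `X̃` is conditionally independent of `(X_U, Y)` given `X_G`
    (hci : CondIndepFun (MeasurableSpace.comap XG inferInstance) hXG.comap_le Xtil
      (fun ω => (XU ω, Y ω)) μ)
    -- `X_j` is conditionally independent of `(X_U, Y)` given `X_G`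
    (hciXj : CondIndepFun (MeasurableSpace.comap XG inferInstance) hXG.comap_le Xj
      (fun ω => (XU ω, Y ω)) μ) :
    (∫ ω, L (Y ω, f (Xtil ω, XU ω, XG ω)) ∂μ) - (∫ ω, L (Y ω, f (Xj ω, XU ω, XG ω)) ∂μ) = 0 := by
  have hW : Measurable (fun ω => (XU ω, Y ω)) := hXU.prodMk hY
  have h1 := (condIndepFun_iff_map_prod_eq_prod_condDistrib_prod_condDistrib hXtil hW hXG).1 hci
  have h2 := (condIndepFun_iff_map_prod_eq_prod_condDistrib_prod_condDistrib hXj hW hXG).1 hciXj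
  have h3 : μ.map (fun ω => (XG ω, Xtil ω, (XU ω, Y ω)))
      = μ.map (fun ω => (XG ω, Xj ω, (XU ω, Y ω))) := by
    rw [h1, h2]
    refine Measure.comp_congr ?_
    filter_upwards [hrep] with g hg
    simp only [Kernel.prod_apply, hg]
  have hF : Measurable (fun p : EG × Ej × (EU × EY) => L (p.2.2.2, f (p.2.1, p.2.2.1, p.1))) := by
    fun_prop
  have e1 := integral_map (μ := μ) (φ := fun ω => (XG ω, Xtil ω, (XU ω, Y ω)))
    (by fun_prop) hF.aestronglyMeasurable
  have e2 := integral_map (μ := μ) (φ := fun ω => (XG ω, Xj ω, (XU ω, Y ω)))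
    (by fun_prop) hF.aestronglyMeasurable
  rw [h3] at e1
  exact sub_eq_zero.2 (e1.symm.trans e2)
end

section
/- Let W : Ω → ℝ be an integrable random variable that is measurable with respect to the σ-algebra generated jointly by random variables A : Ω → E_A and B : Ω → E_B (i.e. W = h(A, B) for some measurable h). If W is conditionally independent of A given the σ-algebra generated by B, then W equals its conditional expectation given σ(B) almost surely: W = μ[W | σ(B)] μ-a.e. In particular, W is almost surely equal to a σ(B)-measurable function. -/
open MeasureTheory ProbabilityTheory
open scoped ProbabilityTheory

/-- Key abstract step of **Lemma 2**: an integrable random variable `W = h(A, B)` that is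
conditionally independent of `A` given `σ(B)` equals its conditional expectation given `σ(B)`
almost surely; in particular, it is a.s. a function of `B` alone. -/
theorem rfi_lemma2_key_step
    {Ω EA EB : Type*}
    [MeasurableSpace Ω] [StandardBorelSpace Ω] [Nonempty Ω]
    [MeasurableSpace EA] [StandardBorelSpace EA] [Nonempty EA]
    [MeasurableSpace EB] [StandardBorelSpace EB] [Nonempty EB]
    (μ : Measure Ω) [IsProbabilityMeasure μ]
    (A : Ω → EA) (B : Ω → EB) (W : Ω → ℝ)
    (hA : Measurable A) (hB : Measurable B)
    (hWint : Integrable W μ)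
    -- `W` is measurable w.r.t. the σ-algebra generated jointly by `A` and `B`,
    -- i.e. `W = h(A, B)` for some measurable `h`
    (hWmeas : ∃ h : EA × EB → ℝ, Measurable h ∧ W = fun ω => h (A ω, B ω))
    -- `W` is conditionally independent of `A` given `σ(B)`
    (hci : CondIndepFun (MeasurableSpace.comap B inferInstance) hB.comap_le W A μ) :
    W =ᵐ[μ] μ[W | MeasurableSpace.comap B inferInstance] := by
  obtain ⟨h, hh, hW⟩ := hWmeas
  have hWm : Measurable W := by rw [hW]; fun_prop
  have h1 := (condIndepFun_iff_condDistrib_prod_ae_eq_prodMkRight hWm hA hB).1 hci.symm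
  have hf : Measurable (fun p : EB × EA => h (p.2, p.1)) := by fun_prop
  have h2 := condDistrib_comp_self (μ := μ) (fun ω => (B ω, A ω)) hf
  have hcomp : (fun p : EB × EA => h (p.2, p.1)) ∘ (fun ω => (B ω, A ω)) = W := by
    rw [hW]; rfl
  rw [hcomp] at h2
  have h3 := ae_of_ae_map (by fun_prop) (h1.symm.trans h2)
  have h4 := condExp_ae_eq_integral_condDistrib' (μ := μ) hB hWint
  filter_upwards [h3, h4] with ω h3 h4
  rw [h4]
  simp only [Kernel.prodMkRight_apply, Kernel.deterministic_apply] at h3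
  rw [h3, integral_dirac, hW]
end

section
/- Let X̃ be a replacement variable for X_j relative to G, and write Ŷ_rep = f(X̃, X_U, X_G) for the prediction on the perturbed input. Assume the law of (X_j, X_U, X_G) under μ is absolutely continuous with respect to the law of (X̃, X_U, X_G) under μ (every observationally possible feature value is interventionally possible). If X̃ is conditionally independent of Ŷ_rep given (X_U, X_G) under μ, then RFI_j^G = 0. -/
open MeasureTheory ProbabilityTheory
open scoped ProbabilityTheory

/-- **Lemma 2**: if the prediction on the perturbed input is conditionally independent of the
replacement variable `X̃` given the remaining features `(X_U, X_G)`, and every observationally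
possible feature value is interventionally possible, then `RFI_j^G = 0`. -/
theorem rfi_lemma2
    {Ω Ej EU EG EY EYh : Type*}
    [MeasurableSpace Ω] [StandardBorelSpace Ω] [Nonempty Ω]
    [MeasurableSpace Ej] [StandardBorelSpace Ej] [Nonempty Ej]
    [MeasurableSpace EU] [StandardBorelSpace EU] [Nonempty EU]
    [MeasurableSpace EG] [StandardBorelSpace EG] [Nonempty EG]
    [MeasurableSpace EY] [StandardBorelSpace EY] [Nonempty EY]
    [MeasurableSpace EYh]
    (μ : Measure Ω) [IsProbabilityMeasure μ]
    (Xj Xtil : Ω → Ej) (XU : Ω → EU) (XG : Ω → EG) (Y : Ω → EY)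
    (hXj : Measurable Xj) (hXtil : Measurable Xtil)
    (hXU : Measurable XU) (hXG : Measurable XG) (hY : Measurable Y)
    (f : Ej × EU × EG → EYh) (hf : Measurable f)
    (L : EY × EYh → ℝ) (hL : Measurable L)
    (hint : Integrable (fun ω => L (Y ω, f (Xj ω, XU ω, XG ω))) μ)
    (hint' : Integrable (fun ω => L (Y ω, f (Xtil ω, XU ω, XG ω))) μ)
    -- (i) the conditional distribution of `X̃` given `X_G` equals that of `X_j` given `X_G`
    (hrep : ∀ᵐ g ∂(μ.map XG), condDistrib Xtil XG μ g = condDistrib Xj XG μ g)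
    -- (ii) `X̃` is conditionally independent of `(X_U, Y)` given `X_G`
    (hci : CondIndepFun (MeasurableSpace.comap XG inferInstance) hXG.comap_le Xtil
      (fun ω => (XU ω, Y ω)) μ)
    -- every observationally possible feature value is interventionally possible
    (hac : μ.map (fun ω => (Xj ω, XU ω, XG ω)) ≪ μ.map (fun ω => (Xtil ω, XU ω, XG ω)))
    -- `X̃` is conditionally independent of the perturbed prediction `Ŷ_rep` given `(X_U, X_G)`
    (hciPred : CondIndepFun
      (MeasurableSpace.comap (fun ω => (XU ω, XG ω)) inferInstance)
      ((hXU.prodMk hXG).comap_le) Xtil (fun ω => f (Xtil ω, XU ω, XG ω)) μ) :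
    (∫ ω, L (Y ω, f (Xtil ω, XU ω, XG ω)) ∂μ) - (∫ ω, L (Y ω, f (Xj ω, XU ω, XG ω)) ∂μ) = 0 := by
  have key : ∀ B : Set EYh, MeasurableSet B → ∃ S : Set (EU × EG),
      (∀ᵐ ω ∂μ, f (Xtil ω, XU ω, XG ω) ∈ B ↔ (XU ω, XG ω) ∈ S) ∧
      (∀ᵐ ω ∂μ, f (Xj ω, XU ω, XG ω) ∈ B ↔ (XU ω, XG ω) ∈ S) := by
    intro B hB
    have hφ : Measurable (B.indicator (fun _ => (1 : ℝ))) := measurable_const.indicator hB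
    set φ : EYh → ℝ := B.indicator (fun _ => (1 : ℝ)) with hφdef
    have hK : Measurable (fun ω => (XU ω, XG ω)) := hXU.prodMk hXG
    have hZ : Measurable (fun ω => φ (f (Xtil ω, XU ω, XG ω))) := by fun_prop
    have h1 := hciPred.comp measurable_id hφ
    have h2 := (condIndepFun_iff_condDistrib_prod_ae_eq_prodMkRight hZ hXtil hK).1 h1
    have hF : Measurable (fun p : (EU × EG) × Ej => φ (f (p.2, p.1.1, p.1.2))) := by fun_prop
    have h3 := condDistrib_comp_self (μ := μ) (fun ω => ((XU ω, XG ω), Xtil ω)) hF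
    set κ := condDistrib (fun ω => φ (f (Xtil ω, XU ω, XG ω))) (fun ω => (XU ω, XG ω)) μ with hκ
    let S : Set (EU × EG) := {k | κ k {1} = 1}
    have hS : MeasurableSet S :=
      (Kernel.measurable_coe κ (measurableSet_singleton 1)) (measurableSet_singleton 1)
    have hT : MeasurableSet {p : Ej × EU × EG | f p ∈ B ↔ p.2 ∈ S} :=
      MeasurableSet.iff (hf hB) (measurable_snd hS)
    have h4 : ∀ᵐ ω ∂μ, f (Xtil ω, XU ω, XG ω) ∈ B ↔ (XU ω, XG ω) ∈ S := by
      have h2' := ae_of_ae_map (by fun_prop) h2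
      have h3' := ae_of_ae_map (by fun_prop) h3
      filter_upwards [h2', h3'] with ω a b
      have c := a.symm.trans b
      rw [Kernel.prodMkRight_apply, Kernel.deterministic_apply] at c
      change _ ↔ κ (XU ω, XG ω) {1} = 1
      rw [hκ, c, Measure.dirac_apply' _ (measurableSet_singleton 1)]
      by_cases hh : f (Xtil ω, XU ω, XG ω) ∈ B <;> simp [hφdef, hh]
    refine ⟨S, h4, ?_⟩
    have h5 : ∀ᵐ p ∂(μ.map (fun ω => (Xtil ω, XU ω, XG ω))), f p ∈ B ↔ p.2 ∈ S :=
      (ae_map_iff (by fun_prop) hT).2 h4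
    exact ae_of_ae_map (by fun_prop) (hac.ae_le h5)
  have hm1 : Measurable (fun ω => (Y ω, f (Xtil ω, XU ω, XG ω))) := by fun_prop
  have hm2 : Measurable (fun ω => (Y ω, f (Xj ω, XU ω, XG ω))) := by fun_prop
  have hlaw : μ.map (fun ω => (Y ω, f (Xtil ω, XU ω, XG ω)))
      = μ.map (fun ω => (Y ω, f (Xj ω, XU ω, XG ω))) := by
    haveI : IsFiniteMeasure (μ.map (fun ω => (Y ω, f (Xtil ω, XU ω, XG ω)))) := inferInstance
    refine Measure.ext_prod ?_
    intro A B hA hB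
    obtain ⟨S, ha, hb⟩ := key B hB
    rw [Measure.map_apply hm1 (hA.prod hB), Measure.map_apply hm2 (hA.prod hB)]
    apply measure_congr
    filter_upwards [ha, hb] with ω a b
    apply propext
    change (Y ω ∈ A ∧ _ ∈ B) ↔ (Y ω ∈ A ∧ _ ∈ B)
    rw [a, b]
  have e1 := integral_map (μ := μ) hm1.aemeasurable (f := L) hL.aestronglyMeasurable
  have e2 := integral_map (μ := μ) hm2.aemeasurable (f := L) hL.aestronglyMeasurable
  rw [← e1, ← e2, hlaw, sub_self]
end

section
/- Let X̃ be a replacement variable for X_j relative to G. If RFI_j^G ≠ 0, then X_j is NOT conditionally independent of the pair (X_U, Y) given X_G (data-level implication of nonzero relative feature importance). -/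
open MeasureTheory ProbabilityTheory
open scoped ProbabilityTheory

/-- Data-level part of **Theorem 1**: nonzero relative feature importance implies that `X_j` is
not conditionally independent of `(X_U, Y)` given `X_G`. -/
theorem rfi_theorem1_data_level
    {Ω Ej EU EG EY EYh : Type*}
    [MeasurableSpace Ω] [StandardBorelSpace Ω] [Nonempty Ω]
    [MeasurableSpace Ej] [StandardBorelSpace Ej] [Nonempty Ej]
    [MeasurableSpace EU] [StandardBorelSpace EU] [Nonempty EU]
    [MeasurableSpace EG] [StandardBorelSpace EG] [Nonempty EG]
    [MeasurableSpace EY] [StandardBorelSpace EY] [Nonempty EY]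
    [MeasurableSpace EYh]
    (μ : Measure Ω) [IsProbabilityMeasure μ]
    (Xj Xtil : Ω → Ej) (XU : Ω → EU) (XG : Ω → EG) (Y : Ω → EY)
    (hXj : Measurable Xj) (hXtil : Measurable Xtil)
    (hXU : Measurable XU) (hXG : Measurable XG) (hY : Measurable Y)
    (f : Ej × EU × EG → EYh) (hf : Measurable f)
    (L : EY × EYh → ℝ) (hL : Measurable L)
    (hint : Integrable (fun ω => L (Y ω, f (Xj ω, XU ω, XG ω))) μ)
    (hint' : Integrable (fun ω => L (Y ω, f (Xtil ω, XU ω, XG ω))) μ)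
    -- (i) the conditional distribution of `X̃` given `X_G` equals that of `X_j` given `X_G`
    (hrep : ∀ᵐ g ∂(μ.map XG), condDistrib Xtil XG μ g = condDistrib Xj XG μ g)
    -- (ii) `X̃` is conditionally independent of `(X_U, Y)` given `X_G`
    (hci : CondIndepFun (MeasurableSpace.comap XG inferInstance) hXG.comap_le Xtil
      (fun ω => (XU ω, Y ω)) μ)
    -- nonzero relative feature importance
    (hRFI : (∫ ω, L (Y ω, f (Xtil ω, XU ω, XG ω)) ∂μ)
      - (∫ ω, L (Y ω, f (Xj ω, XU ω, XG ω)) ∂μ) ≠ 0) :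
    ¬ CondIndepFun (MeasurableSpace.comap XG inferInstance) hXG.comap_le Xj
      (fun ω => (XU ω, Y ω)) μ := by
  intro hcj
  have h1 := (condIndepFun_iff_map_prod_eq_prod_condDistrib_prod_condDistrib
    hXtil (hXU.prodMk hY) hXG).1 hci
  have h2 := (condIndepFun_iff_map_prod_eq_prod_condDistrib_prod_condDistrib
    hXj (hXU.prodMk hY) hXG).1 hcj
  have h3 : (Kernel.id ×ₖ (condDistrib Xtil XG μ ×ₖ condDistrib (fun ω => (XU ω, Y ω)) XG μ))
        ∘ₘ μ.map XG
      = (Kernel.id ×ₖ (condDistrib Xj XG μ ×ₖ condDistrib (fun ω => (XU ω, Y ω)) XG μ))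
        ∘ₘ μ.map XG := by
    apply Measure.bind_congr_right
    filter_upwards [hrep] with g hg
    simp only [Kernel.prod_apply, hg]
  have h4 := h1.trans (h3.trans h2.symm)
  apply hRFI
  let F : EG × Ej × EU × EY → ℝ := fun p => L (p.2.2.2, f (p.2.1, p.2.2.1, p.1))
  have hF : Measurable F := by fun_prop
  have key : ∀ X : Ω → Ej, Measurable X → ∫ ω, L (Y ω, f (X ω, XU ω, XG ω)) ∂μ
      = ∫ p, F p ∂(μ.map (fun ω => (XG ω, X ω, XU ω, Y ω))) := by
    intro X hX
    rw [integral_map (by fun_prop) hF.aestronglyMeasurable]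
  rw [key _ hXtil, key _ hXj, h4, sub_self]
end

section
/- Let X̃ be a replacement variable for X_j relative to G, write Ŷ_rep = f(X̃, X_U, X_G), and assume the law of (X_j, X_U, X_G) under μ is absolutely continuous with respect to the law of (X̃, X_U, X_G) under μ. If RFI_j^G ≠ 0, then X̃ is NOT conditionally independent of Ŷ_rep given (X_U, X_G) under μ (model-level implication of nonzero relative feature importance). -/
open MeasureTheory ProbabilityTheory
open scoped ProbabilityTheory

lemma rfi_aux {Ω Ej EW : Type*}
    [MeasurableSpace Ω] [StandardBorelSpace Ω]
    [MeasurableSpace Ej] [StandardBorelSpace Ej] [Nonempty Ej]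
    [MeasurableSpace EW]
    (μ : Measure Ω) [IsProbabilityMeasure μ]
    (X : Ω → Ej) (W : Ω → EW) (hX : Measurable X) (hW : Measurable W)
    (k : Ej × EW → ℝ) (hk : Measurable k)
    (hkint : Integrable (fun ω => k (X ω, W ω)) μ)
    (h : CondIndepFun (MeasurableSpace.comap W inferInstance) hW.comap_le X
      (fun ω => k (X ω, W ω)) μ) :
    ∃ g : EW → ℝ, Measurable g ∧ ∀ᵐ ω ∂μ, k (X ω, W ω) = g (W ω) := by
  have hkm : Measurable (fun ω => k (X ω, W ω)) := hk.comp (hX.prodMk hW)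
  have hWX : Measurable (fun ω => (W ω, X ω)) := hW.prodMk hX
  have h1 := (condIndepFun_iff_condDistrib_prod_ae_eq_prodMkRight hkm hX hW).1 h
  have h2 := ae_of_ae_map hWX.aemeasurable h1
  have h3 := condExp_ae_eq_integral_condDistrib' hWX hkint
  have h4 : μ[fun ω => k (X ω, W ω) | MeasurableSpace.comap (fun ω => (W ω, X ω)) inferInstance]
      = fun ω => k (X ω, W ω) := by
    apply condExp_of_stronglyMeasurable hWX.comap_le _ hkint
    apply Measurable.stronglyMeasurable
    have : Measurable (fun p : EW × Ej => k (p.2, p.1)) := hk.comp measurable_swap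
    exact this.comp (comap_measurable _)
  rw [h4] at h3
  refine ⟨fun w => ∫ y, y ∂(condDistrib (fun ω => k (X ω, W ω)) W μ w), ?_, ?_⟩
  · exact (stronglyMeasurable_id.integral_kernel (κ := condDistrib (fun ω => k (X ω, W ω)) W μ)).measurable
  · filter_upwards [h2, h3] with ω a2 a3
    rw [a3, a2, Kernel.prodMkRight_apply]

/-- Model-level part of **Theorem 1**: nonzero relative feature importance implies that the
replacement variable `X̃` is not conditionally independent of the perturbed prediction
`Ŷ_rep = f(X̃, X_U, X_G)` given `(X_U, X_G)`. -/
theorem rfi_theorem1_model_level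
    {Ω Ej EU EG EY EYh : Type*}
    [MeasurableSpace Ω] [StandardBorelSpace Ω] [Nonempty Ω]
    [MeasurableSpace Ej] [StandardBorelSpace Ej] [Nonempty Ej]
    [MeasurableSpace EU] [StandardBorelSpace EU] [Nonempty EU]
    [MeasurableSpace EG] [StandardBorelSpace EG] [Nonempty EG]
    [MeasurableSpace EY] [StandardBorelSpace EY] [Nonempty EY]
    [MeasurableSpace EYh]
    (μ : Measure Ω) [IsProbabilityMeasure μ]
    (Xj Xtil : Ω → Ej) (XU : Ω → EU) (XG : Ω → EG) (Y : Ω → EY)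
    (hXj : Measurable Xj) (hXtil : Measurable Xtil)
    (hXU : Measurable XU) (hXG : Measurable XG) (hY : Measurable Y)
    (f : Ej × EU × EG → EYh) (hf : Measurable f)
    (L : EY × EYh → ℝ) (hL : Measurable L)
    (hint : Integrable (fun ω => L (Y ω, f (Xj ω, XU ω, XG ω))) μ)
    (hint' : Integrable (fun ω => L (Y ω, f (Xtil ω, XU ω, XG ω))) μ)
    -- (i) the conditional distribution of `X̃` given `X_G` equals that of `X_j` given `X_G`
    (hrep : ∀ᵐ g ∂(μ.map XG), condDistrib Xtil XG μ g = condDistrib Xj XG μ g)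
    -- (ii) `X̃` is conditionally independent of `(X_U, Y)` given `X_G`
    (hci : CondIndepFun (MeasurableSpace.comap XG inferInstance) hXG.comap_le Xtil
      (fun ω => (XU ω, Y ω)) μ)
    -- every observationally possible feature value is interventionally possible
    (hac : μ.map (fun ω => (Xj ω, XU ω, XG ω)) ≪ μ.map (fun ω => (Xtil ω, XU ω, XG ω)))
    -- nonzero relative feature importance
    (hRFI : (∫ ω, L (Y ω, f (Xtil ω, XU ω, XG ω)) ∂μ)
      - (∫ ω, L (Y ω, f (Xj ω, XU ω, XG ω)) ∂μ) ≠ 0) :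
    ¬ CondIndepFun
      (MeasurableSpace.comap (fun ω => (XU ω, XG ω)) inferInstance)
      ((hXU.prodMk hXG).comap_le) Xtil (fun ω => f (Xtil ω, XU ω, XG ω)) μ := by
  intro hcon
  apply hRFI
  rw [sub_eq_zero]
  have hW := hXU.prodMk hXG
  have key : ∀ B : Set EYh, MeasurableSet B → ∀ᵐ ω ∂μ,
      (f (Xtil ω, XU ω, XG ω) ∈ B ↔ f (Xj ω, XU ω, XG ω) ∈ B) := by
    intro B hB
    have hi : Measurable (B.indicator (fun _ => (1 : ℝ))) := measurable_const.indicator hB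
    have hkm : Measurable (fun p => B.indicator (fun _ => (1 : ℝ)) (f p)) := hi.comp hf
    have hc := hcon.comp measurable_id hi
    obtain ⟨g, hg, hge⟩ := rfi_aux μ Xtil (fun ω => (XU ω, XG ω)) hXtil hW
      (fun p => B.indicator (fun _ => (1 : ℝ)) (f p)) hkm
      (((integrable_const (1 : ℝ)).indicator
        ((hf.comp (hXtil.prodMk hW)) hB))) hc
    have hS : MeasurableSet {p : Ej × EU × EG | B.indicator (fun _ => (1 : ℝ)) (f p) = g p.2} :=
      measurableSet_eq_fun hkm (hg.comp measurable_snd)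
    have m1 : ∀ᵐ p ∂(μ.map (fun ω => (Xtil ω, XU ω, XG ω))),
        B.indicator (fun _ => (1 : ℝ)) (f p) = g p.2 :=
      (ae_map_iff (hXtil.prodMk hW).aemeasurable hS).2 hge
    have m2 := ae_of_ae_map (hXj.prodMk hW).aemeasurable (hac.ae_le m1)
    filter_upwards [hge, m2] with ω a b
    have c := a.trans b.symm
    by_cases p : f (Xtil ω, XU ω, XG ω) ∈ B <;> by_cases q : f (Xj ω, XU ω, XG ω) ∈ B <;>
      simp [p, q] at c ⊢
  have key2 : ∀ S : Set (EY × EYh), MeasurableSet S → ∀ᵐ ω ∂μ,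
      ((Y ω, f (Xtil ω, XU ω, XG ω)) ∈ S ↔ (Y ω, f (Xj ω, XU ω, XG ω)) ∈ S) := by
    intro S hS
    induction S, hS using MeasurableSpace.induction_on_inter generateFrom_prod.symm isPiSystem_prod with
    | empty => simp
    | basic t ht =>
      obtain ⟨a, ha, b, hb, rfl⟩ := ht
      filter_upwards [key b hb] with ω h
      simp [h]
    | compl t ht ih =>
      filter_upwards [ih] with ω h
      simp [h]
    | iUnion F hd hF ih =>
      filter_upwards [ae_all_iff.2 ih] with ω h
      simp [h]
  have key3 : ∀ᵐ ω ∂μ, ∀ q : ℚ, (L (Y ω, f (Xtil ω, XU ω, XG ω)) < q ↔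
      L (Y ω, f (Xj ω, XU ω, XG ω)) < q) :=
    ae_all_iff.2 fun q => key2 _ (hL (measurableSet_Iio (a := (q : ℝ))))
  apply integral_congr_ae
  filter_upwards [key3] with ω h
  apply le_antisymm
  · by_contra! hlt
    obtain ⟨q, h1, h2⟩ := exists_rat_btwn hlt
    exact absurd ((h q).2 h1) (not_lt.2 h2.le)
  · by_contra! hlt
    obtain ⟨q, h1, h2⟩ := exists_rat_btwn hlt
    exact absurd ((h q).1 h1) (not_lt.2 h2.le)
end

section
/- Let X̃ be a replacement variable for X_j relative to G whose conditional independence condition is strengthened to: X̃ is conditionally independent of (X_UU, X_N, Y) given X_G; and let X̃' be a replacement variable for X_j relative to (G, N), i.e. condDistrib X̃' (X_G, X_N) μ = condDistrib X_j (X_G, X_N) μ almost everywhere and X̃' is conditionally independent of (X_UU, Y) given (X_G, X_N). If X_j is conditionally independent of X_N given X_G, then the law of (X̃, Y, X_UU, X_G, X_N) under μ equals the law of (X̃', Y, X_UU, X_G, X_N) under μ. -/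
open MeasureTheory ProbabilityTheory
open scoped ProbabilityTheory

lemma rfi_aux_s9 {Ω A B : Type*} [MeasurableSpace Ω] [MeasurableSpace A] [MeasurableSpace B]
    [StandardBorelSpace B] [Nonempty B]
    (μ : Measure Ω) [IsProbabilityMeasure μ] (W : Ω → A) (X : Ω → B)
    (hW : Measurable W) (hX : Measurable X) (κ : Kernel A B) [IsFiniteKernel κ]
    (h : condDistrib X W μ =ᵐ[μ.map W] κ) (s : Set (A × B)) (hs : MeasurableSet s) :
    μ ((fun ω => (W ω, X ω)) ⁻¹' s) = ∫⁻ ω, κ (W ω) (Prod.mk (W ω) ⁻¹' s) ∂μ := by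
  rw [condDistrib_ae_eq_iff_measure_eq_compProd _ hX.aemeasurable] at h
  rw [← Measure.map_apply (hW.prodMk hX) hs, h, Measure.compProd_apply hs,
    lintegral_map (Kernel.measurable_kernel_prodMk_left hs) hW]

/-- Distributional core of **Theorem 2**: if `X_j ⫫ X_N | X_G`, then the interventional
distribution relative to `G` coincides with the interventional distribution relative to
`G ∪ N`. -/
theorem rfi_theorem2_distributional
    {Ω Ej EUU EN EG EY : Type*}
    [MeasurableSpace Ω] [StandardBorelSpace Ω] [Nonempty Ω]
    [MeasurableSpace Ej] [StandardBorelSpace Ej] [Nonempty Ej]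
    [MeasurableSpace EUU] [StandardBorelSpace EUU] [Nonempty EUU]
    [MeasurableSpace EN] [StandardBorelSpace EN] [Nonempty EN]
    [MeasurableSpace EG] [StandardBorelSpace EG] [Nonempty EG]
    [MeasurableSpace EY] [StandardBorelSpace EY] [Nonempty EY]
    (μ : Measure Ω) [IsProbabilityMeasure μ]
    (Xj Xtil Xtil' : Ω → Ej) (XUU : Ω → EUU) (XN : Ω → EN) (XG : Ω → EG) (Y : Ω → EY)
    (hXj : Measurable Xj) (hXtil : Measurable Xtil) (hXtil' : Measurable Xtil')
    (hXUU : Measurable XUU) (hXN : Measurable XN) (hXG : Measurable XG) (hY : Measurable Y)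
    -- `X̃` is a replacement variable for `X_j` relative to `G` (strengthened version):
    (hrep : ∀ᵐ g ∂(μ.map XG), condDistrib Xtil XG μ g = condDistrib Xj XG μ g)
    (hci : CondIndepFun (MeasurableSpace.comap XG inferInstance) hXG.comap_le Xtil
      (fun ω => (XUU ω, XN ω, Y ω)) μ)
    -- `X̃'` is a replacement variable for `X_j` relative to `(G, N)`:
    (hrep' : ∀ᵐ p ∂(μ.map (fun ω => (XG ω, XN ω))),
      condDistrib Xtil' (fun ω => (XG ω, XN ω)) μ p = condDistrib Xj (fun ω => (XG ω, XN ω)) μ p)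
    (hci' : CondIndepFun
      (MeasurableSpace.comap (fun ω => (XG ω, XN ω)) inferInstance)
      ((hXG.prodMk hXN).comap_le) Xtil' (fun ω => (XUU ω, Y ω)) μ)
    -- `X_j` is conditionally independent of `X_N` given `X_G`
    (hciXjXN : CondIndepFun (MeasurableSpace.comap XG inferInstance) hXG.comap_le Xj XN μ) :
    μ.map (fun ω => (Xtil ω, Y ω, XUU ω, XG ω, XN ω))
      = μ.map (fun ω => (Xtil' ω, Y ω, XUU ω, XG ω, XN ω)) := by
  have h1 := (condIndepFun_iff_condDistrib_prod_ae_eq_prodMkRight hXtil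
    (hXUU.prodMk (hXN.prodMk hY)) hXG).1 hci.symm
  have h2 := (condIndepFun_iff_condDistrib_prod_ae_eq_prodMkRight hXtil'
    (hXUU.prodMk hY) (hXG.prodMk hXN)).1 hci'.symm
  have h3 := (condIndepFun_iff_condDistrib_prod_ae_eq_prodMkRight hXj hXN hXG).1 hciXjXN.symm
  have mW : Measurable (fun ω => (XG ω, (XUU ω, XN ω, Y ω))) := by fun_prop
  have mW' : Measurable (fun ω => ((XG ω, XN ω), (XUU ω, Y ω))) := by fun_prop
  have k1 : condDistrib Xtil (fun ω => (XG ω, (XUU ω, XN ω, Y ω))) μ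
      =ᵐ[μ.map (fun ω => (XG ω, (XUU ω, XN ω, Y ω)))]
      (condDistrib Xj XG μ).prodMkRight _ := by
    have q : ∀ᵐ p ∂(μ.map (fun ω => (XG ω, (XUU ω, XN ω, Y ω)))),
        condDistrib Xtil XG μ p.1 = condDistrib Xj XG μ p.1 := by
      refine ae_of_ae_map (f := Prod.fst)
        (p := fun z => condDistrib Xtil XG μ z = condDistrib Xj XG μ z)
        measurable_fst.aemeasurable ?_
      rw [Measure.map_map measurable_fst mW]
      exact hrep
    filter_upwards [h1, q] with p a b
    rw [a, Kernel.prodMkRight_apply, b, Kernel.prodMkRight_apply]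
  have k2 : condDistrib Xtil' (fun ω => ((XG ω, XN ω), (XUU ω, Y ω))) μ
      =ᵐ[μ.map (fun ω => ((XG ω, XN ω), (XUU ω, Y ω)))]
      ((condDistrib Xj XG μ).prodMkRight EN).prodMkRight _ := by
    have q : ∀ᵐ p ∂(μ.map (fun ω => ((XG ω, XN ω), (XUU ω, Y ω)))),
        condDistrib Xtil' (fun ω => (XG ω, XN ω)) μ p.1
          = (condDistrib Xj XG μ).prodMkRight EN p.1 := by
      refine ae_of_ae_map (f := Prod.fst)
        (p := fun z => condDistrib Xtil' (fun ω => (XG ω, XN ω)) μ z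
          = (condDistrib Xj XG μ).prodMkRight EN z) measurable_fst.aemeasurable ?_
      rw [Measure.map_map measurable_fst mW']
      filter_upwards [hrep', h3] with p a b
      rw [a, b]
    filter_upwards [h2, q] with p a b
    rw [a, Kernel.prodMkRight_apply, b]; rfl
  ext s hs
  rw [Measure.map_apply (by fun_prop) hs, Measure.map_apply (by fun_prop) hs]
  have e1 := rfi_aux_s9 μ _ Xtil mW hXtil _ k1
    ((fun z : (EG × (EUU × EN × EY)) × Ej =>
      (z.2, z.1.2.2.2, z.1.2.1, z.1.1, z.1.2.2.1)) ⁻¹' s)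
    ((by fun_prop : Measurable _) hs)
  have e2 := rfi_aux_s9 μ _ Xtil' mW' hXtil' _ k2
    ((fun z : ((EG × EN) × (EUU × EY)) × Ej =>
      (z.2, z.1.2.2, z.1.2.1, z.1.1.1, z.1.1.2)) ⁻¹' s)
    ((by fun_prop : Measurable _) hs)
  exact e1.trans e2.symm
end

section
/- Let X̃ be a replacement variable for X_j relative to G whose conditional independence condition is strengthened to: X̃ is conditionally independent of (X_UU, X_N, Y) given X_G; and let X̃' be a replacement variable for X_j relative to (G, N), i.e. condDistrib X̃' (X_G, X_N) μ = condDistrib X_j (X_G, X_N) μ almost everywhere and X̃' is conditionally independent of (X_UU, Y) given (X_G, X_N). Define RFI_j^G = ∫ L(Y, f(X̃, X_UU, X_N, X_G)) dμ − R and RFI_j^{G∪N} = ∫ L(Y, f(X̃', X_UU, X_N, X_G)) dμ − R, where R = ∫ L(Y, f(X_j, X_UU, X_N, X_G)) dμ. If RFI_j^G − RFI_j^{G∪N} ≠ 0, then X_j is NOT conditionally independent of X_N given X_G. -/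
open MeasureTheory ProbabilityTheory
open scoped ProbabilityTheory

theorem integral_eq_of_condDistrib_aux {Ω Z T G : Type*} [MeasurableSpace Ω]
    [MeasurableSpace Z] [StandardBorelSpace Z] [Nonempty Z] [MeasurableSpace T] [MeasurableSpace G]
    (μ : Measure Ω) [IsProbabilityMeasure μ] (z : Ω → Z) (t : Ω → T)
    (hz : Measurable z) (ht : Measurable t) (κ : Kernel G Z) (g : T → G)
    (h : T × Z → ℝ) (hh : Measurable h) (hi : Integrable (fun ω => h (t ω, z ω)) μ)
    (hk : ∀ᵐ a ∂(μ.map t), condDistrib z t μ a = κ (g a)) :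
    ∫ ω, h (t ω, z ω) ∂μ = ∫ ω, ∫ x, h (t ω, x) ∂(κ (g (t ω))) ∂μ := by
  have h1 := condExp_prod_ae_eq_integral_condDistrib (μ := μ) ht hz.aemeasurable
    hh.stronglyMeasurable hi
  rw [← integral_condExp ht.comap_le, integral_congr_ae h1]
  refine integral_congr_ae ?_
  filter_upwards [ae_of_ae_map ht.aemeasurable hk] with ω hω
  simp only [hω]

/-- **Theorem 2**: a nonzero change in relative feature importance when enlarging the conditioning
set from `G` to `G ∪ N` implies that `X_j` is not conditionally independent of `X_N`
given `X_G`. -/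
theorem rfi_theorem2
    {Ω Ej EUU EN EG EY EYh : Type*}
    [MeasurableSpace Ω] [StandardBorelSpace Ω] [Nonempty Ω]
    [MeasurableSpace Ej] [StandardBorelSpace Ej] [Nonempty Ej]
    [MeasurableSpace EUU] [StandardBorelSpace EUU] [Nonempty EUU]
    [MeasurableSpace EN] [StandardBorelSpace EN] [Nonempty EN]
    [MeasurableSpace EG] [StandardBorelSpace EG] [Nonempty EG]
    [MeasurableSpace EY] [StandardBorelSpace EY] [Nonempty EY]
    [MeasurableSpace EYh]
    (μ : Measure Ω) [IsProbabilityMeasure μ]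
    (Xj Xtil Xtil' : Ω → Ej) (XUU : Ω → EUU) (XN : Ω → EN) (XG : Ω → EG) (Y : Ω → EY)
    (hXj : Measurable Xj) (hXtil : Measurable Xtil) (hXtil' : Measurable Xtil')
    (hXUU : Measurable XUU) (hXN : Measurable XN) (hXG : Measurable XG) (hY : Measurable Y)
    (f : Ej × EUU × EN × EG → EYh) (hf : Measurable f)
    (L : EY × EYh → ℝ) (hL : Measurable L)
    (hint : Integrable (fun ω => L (Y ω, f (Xj ω, XUU ω, XN ω, XG ω))) μ)
    (hint' : Integrable (fun ω => L (Y ω, f (Xtil ω, XUU ω, XN ω, XG ω))) μ)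
    (hint'' : Integrable (fun ω => L (Y ω, f (Xtil' ω, XUU ω, XN ω, XG ω))) μ)
    -- `X̃` is a replacement variable for `X_j` relative to `G` (strengthened version):
    (hrep : ∀ᵐ g ∂(μ.map XG), condDistrib Xtil XG μ g = condDistrib Xj XG μ g)
    (hci : CondIndepFun (MeasurableSpace.comap XG inferInstance) hXG.comap_le Xtil
      (fun ω => (XUU ω, XN ω, Y ω)) μ)
    -- `X̃'` is a replacement variable for `X_j` relative to `(G, N)`:
    (hrep' : ∀ᵐ p ∂(μ.map (fun ω => (XG ω, XN ω))),
      condDistrib Xtil' (fun ω => (XG ω, XN ω)) μ p = condDistrib Xj (fun ω => (XG ω, XN ω)) μ p)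
    (hci' : CondIndepFun
      (MeasurableSpace.comap (fun ω => (XG ω, XN ω)) inferInstance)
      ((hXG.prodMk hXN).comap_le) Xtil' (fun ω => (XUU ω, Y ω)) μ)
    -- nonzero difference `RFI_j^G − RFI_j^{G ∪ N}`
    (hΔRFI : ((∫ ω, L (Y ω, f (Xtil ω, XUU ω, XN ω, XG ω)) ∂μ)
        - (∫ ω, L (Y ω, f (Xj ω, XUU ω, XN ω, XG ω)) ∂μ))
      - ((∫ ω, L (Y ω, f (Xtil' ω, XUU ω, XN ω, XG ω)) ∂μ)
        - (∫ ω, L (Y ω, f (Xj ω, XUU ω, XN ω, XG ω)) ∂μ)) ≠ 0) :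
    ¬ CondIndepFun (MeasurableSpace.comap XG inferInstance) hXG.comap_le Xj XN μ := by
  intro hind
  apply hΔRFI
  have hW : Measurable (fun ω => (XUU ω, XN ω, Y ω)) := by fun_prop
  have hV : Measurable (fun ω => (XUU ω, Y ω)) := by fun_prop
  have hGN : Measurable (fun ω => (XG ω, XN ω)) := by fun_prop
  have c1 := (condIndepFun_iff_condDistrib_prod_ae_eq_prodMkRight hXtil hW hXG).1 hci.symm
  have c2 := (condIndepFun_iff_condDistrib_prod_ae_eq_prodMkRight hXtil' hV hGN).1 hci'.symm
  have c3 := (condIndepFun_iff_condDistrib_prod_ae_eq_prodMkRight hXj hXN hXG).1 hind.symm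
  have e1 : ∀ᵐ a ∂(μ.map (fun ω => (XG ω, (XUU ω, XN ω, Y ω)))),
      condDistrib Xtil (fun ω => (XG ω, (XUU ω, XN ω, Y ω))) μ a = condDistrib Xj XG μ a.1 := by
    have : ∀ᵐ a ∂(μ.map (fun ω => (XG ω, (XUU ω, XN ω, Y ω)))),
        condDistrib Xtil XG μ a.1 = condDistrib Xj XG μ a.1 := by
      refine ae_of_ae_map (p := fun b => condDistrib Xtil XG μ b = condDistrib Xj XG μ b)
        measurable_fst.aemeasurable ?_
      rw [Measure.map_map measurable_fst (by fun_prop)]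
      exact hrep
    filter_upwards [c1, this] with a h1 h2
    rw [h1, Kernel.prodMkRight_apply, h2]
  have e2 : ∀ᵐ a ∂(μ.map (fun ω => ((XG ω, XN ω), (XUU ω, Y ω)))),
      condDistrib Xtil' (fun ω => ((XG ω, XN ω), (XUU ω, Y ω))) μ a
        = condDistrib Xj XG μ a.1.1 := by
    have : ∀ᵐ a ∂(μ.map (fun ω => ((XG ω, XN ω), (XUU ω, Y ω)))),
        condDistrib Xtil' (fun ω => (XG ω, XN ω)) μ a.1 = condDistrib Xj XG μ a.1.1 := by
      refine ae_of_ae_map (p := fun b => condDistrib Xtil' (fun ω => (XG ω, XN ω)) μ b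
        = condDistrib Xj XG μ b.1) measurable_fst.aemeasurable ?_
      rw [Measure.map_map measurable_fst (by fun_prop)]
      change ∀ᵐ b ∂(μ.map (fun ω => (XG ω, XN ω))), _
      filter_upwards [hrep', c3] with b h1 h2
      rw [h1, h2, Kernel.prodMkRight_apply]
    filter_upwards [c2, this] with a h1 h2
    rw [h1, Kernel.prodMkRight_apply, h2]
  have i1 := integral_eq_of_condDistrib_aux μ Xtil (fun ω => (XG ω, (XUU ω, XN ω, Y ω)))
    hXtil (by fun_prop) (condDistrib Xj XG μ) (fun a => a.1)
    (fun p => L (p.1.2.2.2, f (p.2, p.1.2.1, p.1.2.2.1, p.1.1))) (by fun_prop) hint' e1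
  have i2 := integral_eq_of_condDistrib_aux μ Xtil' (fun ω => ((XG ω, XN ω), (XUU ω, Y ω)))
    hXtil' (by fun_prop) (condDistrib Xj XG μ) (fun a => a.1.1)
    (fun p => L (p.1.2.2, f (p.2, p.1.2.1, p.1.1.2, p.1.1.1))) (by fun_prop) hint'' e2
  simp only at i1 i2
  rw [i1, i2, sub_self]
end
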